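/- Suppose H_0 is twice continuously differentiable on [0,1]. Then for every n ≥ 0 the function h_{n+1} is differentiable at 1 and h_{n+1}'(1) = 0. -/

import Mathlib

open Real MeasureTheory Filter Set
open scoped ENNReal NNReal Classical

namespace OCF

/-- The golden ratio `G = (1+√5)/2`. -/
noncomputable def G : ℝ := (1 + Real.sqrt 5) / 2

/-- `g = (√5-1)/2`. -/
noncomputable def gg : ℝ := (Real.sqrt 5 - 1) / 2

/-- The odd Gauss map. -/
noncomputable def T (x : ℝ) : ℝ :=
  if x = 0 then 0
  else if Odd ⌊1 / x⌋ then Int.fract (1 / x) else 1 - Int.fract (1 / x)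

/-- `eps x n` is `ε_n(x)`; by convention `ε_0(x) = 1`. -/
noncomputable def eps (x : ℝ) : ℕ → ℤ
  | 0 => 1
  | n + 1 => if Odd ⌊1 / (T^[n] x)⌋ then 1 else -1

/-- `a x n` is the `n`-th odd partial quotient `a_n(x)` (for `n ≥ 1`). -/
noncomputable def a (x : ℝ) : ℕ → ℤ
  | 0 => 1
  | n + 1 => if Odd ⌊1 / (T^[n] x)⌋ then ⌊1 / (T^[n] x)⌋ else 1 + ⌊1 / (T^[n] x)⌋

/-- `r x n = r_n(x) = a_n(x) + ε_n(x) Tⁿ(x)` for `n ≥ 1`. -/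
noncomputable def r (x : ℝ) (n : ℕ) : ℝ := (a x n : ℝ) + (eps x n : ℝ) * T^[n] x

/-- The distribution functions: `H μ 0 x = μ([0,x])` and, for `n ≥ 1`,
`H μ n x = μ({y ∈ (0,1) : y irrational, 1/r_{n+1}(y) < x})`. -/
noncomputable def H (μ : Measure ℝ) : ℕ → ℝ → ℝ
  | 0 => fun x => (μ (Set.Icc 0 x)).toReal
  | n + 1 => fun x =>
      (μ {y | y ∈ Set.Ioo (0 : ℝ) 1 ∧ Irrational y ∧ 1 / r y (n + 2) < x}).toReal

/-- `h μ n x = H_n'(x) / ((x+G-1)⁻¹ - (x-G-1)⁻¹)`, the derivative being taken within `[0,1]`. -/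
noncomputable def h (μ : Measure ℝ) (n : ℕ) (x : ℝ) : ℝ :=
  derivWithin (H μ n) (Set.Icc 0 1) x / ((x + G - 1)⁻¹ - (x - G - 1)⁻¹)

/-- `η = 4g Σ_{i odd} 1/((G+i) i (i+2))`. -/
noncomputable def eta : ℝ :=
  4 * gg * ∑' m : ℕ, 1 / ((G + (2 * (m : ℝ) + 1)) * (2 * (m : ℝ) + 1) * (2 * (m : ℝ) + 3))

end OCF

open OCF


/-- The invariant carried along the iteration. -/
def Good (ν : Measure ℝ) (f f' : ℝ → ℝ) : Prop :=
  ∃ (F : ℝ → ℝ) (B : ℝ),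
    (∀ x ∈ Ioo (-1/3 : ℝ) (3/2), HasDerivAt F (f x) x) ∧
    (∀ x ∈ Ioo (-1/3 : ℝ) (3/2), HasDerivAt f (f' x) x) ∧
    (∀ x ∈ Ioo (-1/3 : ℝ) (3/2), |f x| ≤ B) ∧
    (∀ x ∈ Ioo (-1/3 : ℝ) (3/2), |f' x| ≤ B) ∧
    (∀ x ∈ Icc (0 : ℝ) 1, (ν (Iio x)).toReal = F x)

lemma measurable_T : Measurable T := by
  unfold T
  have hfl : Measurable (fun x : ℝ => ⌊1 / x⌋) :=
    Int.measurable_floor.comp (measurable_const.div measurable_id)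
  have hfr : Measurable (fun x : ℝ => Int.fract (1 / x)) :=
    measurable_fract.comp (measurable_const.div measurable_id)
  refine Measurable.ite (measurableSet_singleton 0) measurable_const ?_
  refine Measurable.ite ?_ hfr (measurable_const.sub hfr)
  exact hfl (MeasurableSet.of_discrete (s := {z : ℤ | Odd z}))

lemma T_mem (t : ℝ) : T t ∈ Icc (0 : ℝ) 1 := by
  unfold T
  have h1 := Int.fract_nonneg (1 / t)
  have h2 := (Int.fract_lt_one (1 / t)).le
  split_ifs <;> constructor <;> linarith

lemma T_fiber_countable (c : ℝ) : (T ⁻¹' {c}).Countable := by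
  have hsub : T ⁻¹' {c} ⊆ {0} ∪ (range (fun z : ℤ => 1 / ((z : ℝ) + c)) ∪
      range (fun z : ℤ => 1 / ((z : ℝ) + (1 - c)))) := by
    intro t ht
    by_cases h0 : t = 0
    · left; exact h0
    right
    have ht' : T t = c := ht
    unfold T at ht'
    rw [if_neg h0] at ht'
    have key := Int.floor_add_fract (1 / t)
    split_ifs at ht' with ho
    · left
      refine ⟨⌊1 / t⌋, ?_⟩
      simp only
      rw [← ht', key, one_div_one_div]
    · right
      refine ⟨⌊1 / t⌋, ?_⟩
      simp only
      rw [← ht', sub_sub_cancel, key, one_div_one_div]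
  exact Countable.mono hsub ((countable_singleton 0).union
    ((countable_range _).union (countable_range _)))

lemma map_T_null (ν : Measure ℝ) (hν : ∀ c, ν {c} = 0) (c : ℝ) : (ν.map T) {c} = 0 := by
  have : NullSingletonClass ν := ⟨hν⟩
  rw [Measure.map_apply measurable_T (measurableSet_singleton c)]
  exact (T_fiber_countable c).measure_zero ν

lemma map_T_supp (ν : Measure ℝ) : (ν.map T) (Icc (0 : ℝ) 1)ᶜ = 0 := by
  rw [Measure.map_apply measurable_T measurableSet_Icc.compl]
  have : T ⁻¹' (Icc (0 : ℝ) 1)ᶜ = ∅ := by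
    ext t; simp only [mem_preimage, mem_compl_iff, mem_empty_iff_false, iff_false, not_not]
    exact T_mem t
  rw [this]; simp

/-- The `m`-th piece of the preimage. -/
def A (x : ℝ) (m : ℕ) : Set ℝ :=
  Ioo (1 / (2 * (m : ℝ) + 3)) (1 / (2 * (m : ℝ) + 3 - x)) ∪
  Ioc (1 / (2 * (m : ℝ) + 1 + x)) (1 / (2 * (m : ℝ) + 1))

lemma A_subset {x : ℝ} (hx : x ∈ Icc (0 : ℝ) 1) (m : ℕ) :
    A x m ⊆ Ioc (1 / (2 * (m : ℝ) + 3)) (1 / (2 * (m : ℝ) + 1)) := by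
  obtain ⟨h0, h1⟩ := hx
  have hm : (0 : ℝ) ≤ m := Nat.cast_nonneg m
  rintro t (⟨ha, hb⟩ | ⟨ha, hb⟩)
  · refine ⟨ha, hb.le.trans ?_⟩
    exact one_div_le_one_div_of_le (by linarith) (by linarith)
  · refine ⟨lt_of_le_of_lt ?_ ha, hb⟩
    exact one_div_le_one_div_of_le (by linarith) (by linarith)

lemma A_disj {x : ℝ} (hx : x ∈ Icc (0 : ℝ) 1) :
    Pairwise (Function.onFun Disjoint (A x)) := by
  intro i j hij
  rw [Function.onFun, Set.disjoint_left]
  intro t hi hj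
  have hi := A_subset hx i hi
  have hj := A_subset hx j hj
  have key : ∀ i j : ℕ, i < j → t ∈ Ioc (1 / (2 * (i : ℝ) + 3)) (1 / (2 * (i : ℝ) + 1)) →
      t ∈ Ioc (1 / (2 * (j : ℝ) + 3)) (1 / (2 * (j : ℝ) + 1)) → False := by
    intro i j hij hi hj
    have h1 : (i : ℝ) + 1 ≤ j := by exact_mod_cast hij
    have hi0 : (0 : ℝ) ≤ i := Nat.cast_nonneg i
    have := one_div_le_one_div_of_le (show (0 : ℝ) < 2 * (i : ℝ) + 3 by linarith)
      (show 2 * (i : ℝ) + 3 ≤ 2 * (j : ℝ) + 1 by linarith)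
    linarith [hi.1, hj.2]
  rcases lt_or_gt_of_ne hij with h | h
  · exact key i j h hi hj
  · exact key j i h hj hi

lemma T_lt_iff {x t : ℝ} (hx : x ∈ Icc (0 : ℝ) 1) (ht0 : 0 < t) (ht1 : t ≤ 1) :
    T t < x ↔ t ∈ ⋃ m, A x m := by
  obtain ⟨h0, h1⟩ := hx
  obtain ⟨s, hs⟩ : ∃ s, s = 1 / t := ⟨_, rfl⟩
  have hts : t = 1 / s := by rw [hs, one_div_one_div]
  have hs1 : 1 ≤ s := by rw [hs, le_div_iff₀ ht0]; linarith
  have hs0 : 0 < s := by linarith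
  have hA : ∀ m : ℕ, t ∈ A x m ↔ (2 * (m : ℝ) + 3 - x < s ∧ s < 2 * (m : ℝ) + 3) ∨
      (2 * (m : ℝ) + 1 ≤ s ∧ s < 2 * (m : ℝ) + 1 + x) := by
    intro m
    have hm : (0 : ℝ) ≤ m := Nat.cast_nonneg m
    unfold A
    rw [hts]
    simp only [mem_union, mem_Ioo, mem_Ioc]
    rw [one_div_lt_one_div (by linarith) hs0, one_div_lt_one_div hs0 (by linarith),
      one_div_lt_one_div (by linarith) hs0, one_div_le_one_div hs0 (by linarith)]
    tauto
  simp only [mem_iUnion, hA]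
  have hT : T t = if Odd ⌊s⌋ then Int.fract s else 1 - Int.fract s := by
    unfold T; rw [if_neg ht0.ne', hs]
  rw [hT]
  have hfl : (1 : ℤ) ≤ ⌊s⌋ := by rw [Int.le_floor]; exact_mod_cast hs1
  have hl := Int.floor_le s
  have hu := Int.lt_floor_add_one s
  have hf : Int.fract s = s - ⌊s⌋ := rfl
  rw [hf]
  generalize ⌊s⌋ = z at *
  have loc : ∀ (m : ℕ), 2 * (m : ℝ) + 1 ≤ s → s < 2 * (m : ℝ) + 3 →
      z = 2 * (m : ℤ) + 1 ∨ z = 2 * (m : ℤ) + 2 := by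
    intro m ha hb
    have i1 : (z : ℝ) < 2 * (m : ℝ) + 3 := by linarith
    have i2 : 2 * (m : ℝ) < z := by linarith
    have i1' : z < 2 * (m : ℤ) + 3 := by exact_mod_cast i1
    have i2' : 2 * (m : ℤ) < z := by exact_mod_cast i2
    omega
  split_ifs with ho
  · constructor
    · intro hlt
      obtain ⟨k, hk⟩ := ho
      refine ⟨k.toNat, Or.inr ?_⟩
      have hkk : ((k.toNat : ℕ) : ℝ) = (k : ℝ) := by
        have : ((k.toNat : ℕ) : ℤ) = k := Int.toNat_of_nonneg (by omega)
        exact_mod_cast this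
      rw [hkk]
      have : (z : ℝ) = 2 * k + 1 := by rw [hk]; push_cast; ring
      constructor <;> linarith
    · rintro ⟨m, ⟨ha, hb⟩ | ⟨ha, hb⟩⟩
      · rcases loc m (by linarith) hb with hz | hz
        · rw [hz] at hu; push_cast at hu; linarith
        · exfalso; rw [hz] at ho; rw [Int.odd_iff] at ho; omega
      · rcases loc m ha (by linarith) with hz | hz
        · rw [hz]; push_cast; linarith
        · exfalso; rw [hz] at ho; rw [Int.odd_iff] at ho; omega
  · rw [Int.not_odd_iff_even] at ho
    constructor
    · intro hlt
      obtain ⟨k, hk⟩ := ho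
      refine ⟨(k - 1).toNat, Or.inl ?_⟩
      have hkk : (((k - 1).toNat : ℕ) : ℝ) = (k : ℝ) - 1 := by
        have : (((k - 1).toNat : ℕ) : ℤ) = k - 1 := Int.toNat_of_nonneg (by omega)
        exact_mod_cast this
      rw [hkk]
      have : (z : ℝ) = 2 * k := by rw [hk]; push_cast; ring
      constructor <;> linarith
    · rintro ⟨m, ⟨ha, hb⟩ | ⟨ha, hb⟩⟩
      · rcases loc m (by linarith) hb with hz | hz
        · exfalso; rw [hz] at ho; rw [Int.even_iff] at ho; omega
        · rw [hz]; push_cast; linarith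
      · rcases loc m ha (by linarith) with hz | hz
        · exfalso; rw [hz] at ho; rw [Int.even_iff] at ho; omega
        · rw [hz] at hl; push_cast at hl; linarith

lemma Ioo_meas {ν : Measure ℝ} [IsProbabilityMeasure ν] (hν : ∀ c, ν {c} = 0) {p q : ℝ}
    (hpq : p ≤ q) : (ν (Ioc p q)).toReal = (ν (Iio q)).toReal - (ν (Iio p)).toReal ∧
      ν (Ioo p q) = ν (Ioc p q) := by
  have : NullSingletonClass ν := ⟨hν⟩
  have h1 : ν (Ioo p q) = ν (Ioc p q) := measure_congr Ioo_ae_eq_Ioc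
  refine ⟨?_, h1⟩
  have h2 : ν (Ico p q) = ν (Ioc p q) := measure_congr Ico_ae_eq_Ioc
  rw [← h2]
  have h3 : Ico p q = Iio q \ Iio p := by ext t; simp [and_comm]
  have := measureReal_diff (μ := ν) (Iio_subset_Iio hpq) measurableSet_Iio
  rw [h3]; exact this

lemma A_meas {ν : Measure ℝ} [IsProbabilityMeasure ν] (hν : ∀ c, ν {c} = 0) {F : ℝ → ℝ}
    (hF : ∀ x ∈ Icc (0 : ℝ) 1, (ν (Iio x)).toReal = F x) {x : ℝ} (hx : x ∈ Icc (0 : ℝ) 1)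
    (m : ℕ) : (ν (A x m)).toReal =
      (F (1 / (2 * (m : ℝ) + 1)) - F (1 / (2 * (m : ℝ) + 1 + x))) +
      (F (1 / (2 * (m : ℝ) + 3 - x)) - F (1 / (2 * (m : ℝ) + 3))) := by
  obtain ⟨h0, h1⟩ := hx
  have hm : (0 : ℝ) ≤ m := Nat.cast_nonneg m
  have mem : ∀ u : ℝ, 1 ≤ u → 1 / u ∈ Icc (0 : ℝ) 1 := by
    intro u hu
    refine ⟨by positivity, ?_⟩
    rw [div_le_one (by linarith)]; exact hu
  have hd : Disjoint (Ioo (1 / (2 * (m : ℝ) + 3)) (1 / (2 * (m : ℝ) + 3 - x)))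
      (Ioc (1 / (2 * (m : ℝ) + 1 + x)) (1 / (2 * (m : ℝ) + 1))) := by
    rw [Set.disjoint_left]
    intro t ha hb
    have := one_div_le_one_div_of_le (show (0 : ℝ) < 2 * (m : ℝ) + 1 + x by linarith)
      (show 2 * (m : ℝ) + 1 + x ≤ 2 * (m : ℝ) + 3 - x by linarith)
    linarith [ha.2, hb.1]
  unfold A
  rw [measure_union hd measurableSet_Ioc,
    ENNReal.toReal_add (measure_ne_top _ _) (measure_ne_top _ _)]
  obtain ⟨e1, e2⟩ := Ioo_meas hν (one_div_le_one_div_of_le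
    (show (0 : ℝ) < 2 * (m : ℝ) + 3 - x by linarith)
    (show 2 * (m : ℝ) + 3 - x ≤ 2 * (m : ℝ) + 3 by linarith))
  obtain ⟨e3, -⟩ := Ioo_meas hν (one_div_le_one_div_of_le
    (show (0 : ℝ) < 2 * (m : ℝ) + 1 by linarith)
    (show 2 * (m : ℝ) + 1 ≤ 2 * (m : ℝ) + 1 + x by linarith))
  rw [e2, e1, e3, hF _ (mem _ (by linarith)), hF _ (mem _ (by linarith)),
    hF _ (mem _ (by linarith)), hF _ (mem _ (by linarith))]
  ring

lemma map_T_Iio {ν : Measure ℝ} [IsProbabilityMeasure ν] (hν : ∀ c, ν {c} = 0)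
    (hs : ν (Icc (0 : ℝ) 1)ᶜ = 0) {F : ℝ → ℝ}
    (hF : ∀ x ∈ Icc (0 : ℝ) 1, (ν (Iio x)).toReal = F x) {x : ℝ} (hx : x ∈ Icc (0 : ℝ) 1) :
    ((ν.map T) (Iio x)).toReal = ∑' m : ℕ,
      ((F (1 / (2 * (m : ℝ) + 1)) - F (1 / (2 * (m : ℝ) + 1 + x))) +
      (F (1 / (2 * (m : ℝ) + 3 - x)) - F (1 / (2 * (m : ℝ) + 3)))) := by
  rw [Measure.map_apply measurable_T measurableSet_Iio]
  have hae : (T ⁻¹' Iio x : Set ℝ) =ᵐ[ν] (⋃ m, A x m : Set ℝ) := by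
    have a1 : ∀ᵐ t ∂ν, t ∈ Icc (0 : ℝ) 1 := by
      rw [ae_iff]; exact hs
    have a2 : ∀ᵐ t ∂ν, t ≠ 0 := by
      rw [ae_iff]; simpa using hν 0
    rw [Filter.eventuallyEq_set]
    filter_upwards [a1, a2] with t h1 h2
    exact T_lt_iff hx (lt_of_le_of_ne h1.1 (Ne.symm h2)) h1.2
  rw [measure_congr hae, measure_iUnion (A_disj hx)
    (fun m => measurableSet_Ioo.union measurableSet_Ioc),
    ENNReal.tsum_toReal_eq (fun m => measure_ne_top _ _)]
  exact tsum_congr (fun m => A_meas hν hF hx m)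

/-- One-term derivative of `φ(u) = f(1/u)/u^2`, and of `F(1/u)`, with the bounds. -/
lemma term_facts {F f f' : ℝ → ℝ} {B : ℝ}
    (h1 : ∀ x ∈ Ioo (-1/3 : ℝ) (3/2), HasDerivAt F (f x) x)
    (h2 : ∀ x ∈ Ioo (-1/3 : ℝ) (3/2), HasDerivAt f (f' x) x)
    (h3 : ∀ x ∈ Ioo (-1/3 : ℝ) (3/2), |f x| ≤ B)
    (h4 : ∀ x ∈ Ioo (-1/3 : ℝ) (3/2), |f' x| ≤ B) (m : ℕ) (u : ℝ)
    (hu : 2 / 3 * ((m : ℝ) + 1) < u) :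
    HasDerivAt (fun u => F (1 / u)) (-(f (1 / u) * (1 / u) ^ 2)) u ∧
    HasDerivAt (fun u => f (1 / u) * (1 / u) ^ 2)
      (-(f' (1 / u) * (1 / u) ^ 4 + 2 * f (1 / u) * (1 / u) ^ 3)) u ∧
    |f (1 / u) * (1 / u) ^ 2| ≤ 12 * B * (1 / ((m : ℝ) + 1) ^ 2) ∧
    |f' (1 / u) * (1 / u) ^ 4 + 2 * f (1 / u) * (1 / u) ^ 3| ≤
      12 * B * (1 / ((m : ℝ) + 1) ^ 2) := by
  have hm : (0 : ℝ) ≤ m := Nat.cast_nonneg m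
  have hu0 : 0 < u := by linarith
  have hw0 : 0 < 1 / u := by positivity
  have hw1 : 1 / u ≤ 3 / 2 * (1 / ((m : ℝ) + 1)) := by
    have := one_div_le_one_div_of_le (by positivity) hu.le
    refine this.trans (le_of_eq ?_)
    field_simp
  have hw2 : 1 / u < 3 / 2 := by
    rw [div_lt_iff₀ hu0]; linarith
  have hmem : 1 / u ∈ Ioo (-1/3 : ℝ) (3/2) := ⟨by linarith, hw2⟩
  have hinv : HasDerivAt (fun u : ℝ => 1 / u) (-(1 / u) ^ 2) u := by
    have := hasDerivAt_inv hu0.ne'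
    simp only [one_div]
    refine HasDerivAt.congr_deriv this ?_
    simp
  have hB : 0 ≤ B := (abs_nonneg _).trans (h3 _ hmem)
  have d1 : HasDerivAt (fun u => f (1 / u)) (f' (1 / u) * (-(1 / u) ^ 2)) u :=
    (h2 _ hmem).comp u hinv
  have b1 := h3 _ hmem
  have b2 := h4 _ hmem
  refine ⟨?_, ?_, ?_, ?_⟩
  · have := (h1 _ hmem).comp u hinv
    refine HasDerivAt.congr_deriv this ?_
    ring
  · have := d1.mul (hinv.pow 2)
    refine HasDerivAt.congr_deriv this ?_
    simp only [Pi.pow_apply]; push_cast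
    ring
  all_goals
    generalize 1 / u = w at *
    have hq : w ^ 2 ≤ 9 / 4 * (1 / ((m : ℝ) + 1) ^ 2) := by
      have := pow_le_pow_left₀ hw0.le hw1 2
      refine this.trans (le_of_eq ?_)
      rw [mul_pow, div_pow, div_pow]; norm_num
    have hBq := mul_le_mul_of_nonneg_left hq hB
    have hBq0 : 0 ≤ B * w ^ 2 := by positivity
  · rw [abs_mul, abs_of_nonneg (show 0 ≤ w ^ 2 by positivity)]
    have := mul_le_mul_of_nonneg_right b1 (show 0 ≤ w ^ 2 by positivity)
    have : 0 ≤ B * (1 / ((m : ℝ) + 1) ^ 2) := by positivity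
    linarith
  · have c1 : |f' w * w ^ 4 + 2 * f w * w ^ 3| ≤ B * w ^ 4 + 2 * B * w ^ 3 := by
      refine (abs_add_le _ _).trans ?_
      rw [abs_mul, abs_mul, abs_mul, abs_of_nonneg (show 0 ≤ w ^ 4 by positivity),
        abs_of_nonneg (show 0 ≤ w ^ 3 by positivity), abs_two]
      gcongr
    have c2 : B * w ^ 4 + 2 * B * w ^ 3 ≤ B * w ^ 2 * (21 / 4) := by
      have : B * w ^ 4 + 2 * B * w ^ 3 = B * w ^ 2 * (w ^ 2 + 2 * w) := by ring
      rw [this]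
      refine mul_le_mul_of_nonneg_left ?_ hBq0
      nlinarith
    have : 0 ≤ B * (1 / ((m : ℝ) + 1) ^ 2) := by positivity
    linarith

lemma good_step {ν : Measure ℝ} [IsProbabilityMeasure ν] (hν : ∀ c, ν {c} = 0)
    (hs : ν (Icc (0 : ℝ) 1)ᶜ = 0) {f f' : ℝ → ℝ} (hg : Good ν f f') :
    ∃ k k' : ℝ → ℝ, Good (ν.map T) k k' ∧ k' 1 = 0 := by
  obtain ⟨F, B, h1, h2, h3, h4, h5⟩ := hg
  have tf := term_facts h1 h2 h3 h4
  set bd : ℕ → ℝ := fun m => 12 * B * (1 / ((m : ℝ) + 1) ^ 2) +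
    12 * B * (1 / ((m : ℝ) + 1) ^ 2) with hbd
  have hsum0 : Summable (fun m : ℕ => 1 / ((m : ℝ) + 1) ^ 2) := by
    have := (summable_nat_add_iff 1).2 (Real.summable_one_div_nat_pow.2 one_lt_two)
    simpa using this
  have hsum : Summable bd := (hsum0.mul_left _).add (hsum0.mul_left _)
  set p0 : ℕ → ℝ → ℝ := fun m x =>
      ((F (1 / (2 * (m : ℝ) + 1)) - F (1 / (2 * (m : ℝ) + 1 + x))) +
      (F (1 / (2 * (m : ℝ) + 3 - x)) - F (1 / (2 * (m : ℝ) + 3)))) with hp0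
  set φ : ℝ → ℝ := fun u => f (1 / u) * (1 / u) ^ 2 with hφ
  set ψ : ℝ → ℝ := fun u => f' (1 / u) * (1 / u) ^ 4 + 2 * f (1 / u) * (1 / u) ^ 3 with hψ
  set p1 : ℕ → ℝ → ℝ := fun m x => φ (2 * (m : ℝ) + 1 + x) + φ (2 * (m : ℝ) + 3 - x) with hp1
  set p2 : ℕ → ℝ → ℝ := fun m x => -ψ (2 * (m : ℝ) + 1 + x) + ψ (2 * (m : ℝ) + 3 - x) with hp2
  have hu1 : ∀ m : ℕ, ∀ x ∈ Ioo (-1/3 : ℝ) (3/2), 2 / 3 * ((m : ℝ) + 1) < 2 * (m : ℝ) + 1 + x := by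
    intro m x hx
    have hm : (0 : ℝ) ≤ m := Nat.cast_nonneg m
    linarith [hx.1]
  have hu2 : ∀ m : ℕ, ∀ x ∈ Ioo (-1/3 : ℝ) (3/2), 2 / 3 * ((m : ℝ) + 1) < 2 * (m : ℝ) + 3 - x := by
    intro m x hx
    have hm : (0 : ℝ) ≤ m := Nat.cast_nonneg m
    linarith [hx.2]
  have hd0 : ∀ m : ℕ, ∀ x ∈ Ioo (-1/3 : ℝ) (3/2), HasDerivAt (p0 m) (p1 m x) x := by
    intro m x hx
    have t1 := (tf m _ (hu1 m x hx)).1.comp_const_add (2 * (m : ℝ) + 1) x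
    have t2 := (tf m _ (hu2 m x hx)).1.comp_const_sub (2 * (m : ℝ) + 3) x
    have := (t1.const_sub (F (1 / (2 * (m : ℝ) + 1)))).add
      (t2.sub_const (F (1 / (2 * (m : ℝ) + 3))))
    refine HasDerivAt.congr_deriv this ?_
    simp only [hp1, hφ]; ring
  have hd1 : ∀ m : ℕ, ∀ x ∈ Ioo (-1/3 : ℝ) (3/2), HasDerivAt (p1 m) (p2 m x) x := by
    intro m x hx
    have t1 := (tf m _ (hu1 m x hx)).2.1.comp_const_add (2 * (m : ℝ) + 1) x
    have t2 := (tf m _ (hu2 m x hx)).2.1.comp_const_sub (2 * (m : ℝ) + 3) x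
    have := t1.add t2
    refine HasDerivAt.congr_deriv this ?_
    simp only [hp2, hψ]; ring
  have hb1 : ∀ m : ℕ, ∀ x ∈ Ioo (-1/3 : ℝ) (3/2), ‖p1 m x‖ ≤ bd m := by
    intro m x hx
    exact (norm_add_le _ _).trans (add_le_add (tf m _ (hu1 m x hx)).2.2.1
      (tf m _ (hu2 m x hx)).2.2.1)
  have hb2 : ∀ m : ℕ, ∀ x ∈ Ioo (-1/3 : ℝ) (3/2), ‖p2 m x‖ ≤ bd m := by
    intro m x hx
    refine (norm_add_le _ _).trans ?_
    rw [norm_neg]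
    exact (add_le_add (tf m _ (hu1 m x hx)).2.2.2 (tf m _ (hu2 m x hx)).2.2.2)
  have h0mem : (0 : ℝ) ∈ Ioo (-1/3 : ℝ) (3/2) := by constructor <;> norm_num
  have hS0 : Summable (fun m => p0 m 0) := by
    have : (fun m => p0 m 0) = fun _ => 0 := by
      funext m; simp [hp0]
    rw [this]; exact summable_zero
  have hS1 : Summable (fun m => p1 m 0) :=
    Summable.of_norm_bounded hsum (fun m => hb1 m 0 h0mem)
  refine ⟨fun x => ∑' m, p1 m x, fun x => ∑' m, p2 m x,
    ⟨fun x => ∑' m, p0 m x, ∑' m, bd m, ?_, ?_, ?_, ?_, ?_⟩, ?_⟩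
  · intro x hx
    exact hasDerivAt_tsum_of_isPreconnected hsum isOpen_Ioo isPreconnected_Ioo hd0 hb1 h0mem hS0 hx
  · intro x hx
    exact hasDerivAt_tsum_of_isPreconnected hsum isOpen_Ioo isPreconnected_Ioo hd1 hb2 h0mem hS1 hx
  · intro x hx
    exact tsum_of_norm_bounded hsum.hasSum (fun m => hb1 m x hx)
  · intro x hx
    exact tsum_of_norm_bounded hsum.hasSum (fun m => hb2 m x hx)
  · intro x hx
    exact map_T_Iio hν hs h5 hx
  · have : ∀ m : ℕ, p2 m 1 = 0 := by
      intro m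
      have : 2 * (m : ℝ) + 3 - 1 = 2 * (m : ℝ) + 1 + 1 := by ring
      simp only [hp2, this]; ring
    simp [this]

lemma good_zero (μ : Measure ℝ) [IsProbabilityMeasure μ] (hν : ∀ c, μ {c} = 0)
    (hμ : μ (Set.Icc (0 : ℝ) 1)ᶜ = 0)
    (h0 : ContDiffOn ℝ 2 (H μ 0) (Set.Icc (0 : ℝ) 1)) : ∃ f f', Good μ f f' := by
  have hU : UniqueDiffOn ℝ (Icc (0 : ℝ) 1) := uniqueDiffOn_Icc_zero_one
  set f0 := derivWithin (H μ 0) (Icc (0 : ℝ) 1) with hf0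
  have h1 : ContDiffOn ℝ 1 f0 (Icc (0 : ℝ) 1) := h0.derivWithin hU (by norm_num)
  set g0 := derivWithin f0 (Icc (0 : ℝ) 1) with hg0
  have h2 : ContinuousOn g0 (Icc (0 : ℝ) 1) := h1.continuousOn_derivWithin hU le_rfl
  set f' : ℝ → ℝ := IccExtend zero_le_one ((Icc (0 : ℝ) 1).restrict g0) with hf'
  have hf'c : Continuous f' := (continuousOn_iff_continuous_restrict.1 h2).Icc_extend'
  have hf'e : ∀ x ∈ Icc (0 : ℝ) 1, f' x = g0 x := fun x hx => by
    rw [hf', IccExtend_of_mem _ _ hx]; rfl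
  set f : ℝ → ℝ := fun x => f0 0 + ∫ t in (0 : ℝ)..x, f' t with hf
  have hfd : ∀ x, HasDerivAt f (f' x) x := fun x =>
    (intervalIntegral.integral_hasDerivAt_right (hf'c.intervalIntegrable _ _)
      (hf'c.stronglyMeasurableAtFilter _ _) hf'c.continuousAt).const_add _
  have hfc : Continuous f := continuous_iff_continuousAt.2 fun x => (hfd x).continuousAt
  have huniq : ∀ (p q d d' : ℝ → ℝ), (∀ x ∈ Icc (0 : ℝ) 1, HasDerivWithinAt p (d x) (Icc 0 1) x) →
      (∀ x ∈ Icc (0 : ℝ) 1, HasDerivWithinAt q (d' x) (Icc 0 1) x) →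
      (∀ x ∈ Icc (0 : ℝ) 1, d x = d' x) → p 0 = q 0 → ∀ x ∈ Icc (0 : ℝ) 1, p x = q x := by
    intro p q d d' hp hq hd hpq x hx
    have hz : ∀ y ∈ Icc (0 : ℝ) 1, HasDerivWithinAt (fun y => p y - q y) 0 (Icc 0 1) y := by
      intro y hy
      have := (hp y hy).sub (hq y hy)
      rw [hd y hy, sub_self] at this
      exact this
    have := constant_of_derivWithin_zero (fun y hy => (hz y hy).differentiableWithinAt)
      (fun y hy => (hz y (Ico_subset_Icc_self hy)).derivWithin (hU y (Ico_subset_Icc_self hy))) x hx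
    simp only [hpq, sub_self] at this
    linarith
  have hfe : ∀ x ∈ Icc (0 : ℝ) 1, f x = f0 x := by
    refine huniq f f0 f' g0 (fun x _ => (hfd x).hasDerivWithinAt) (fun x hx => ?_) hf'e (by simp [hf])
    exact ((h1.differentiableOn one_ne_zero) x hx).hasDerivWithinAt
  set F : ℝ → ℝ := fun x => H μ 0 0 + ∫ t in (0 : ℝ)..x, f t with hF
  have hFd : ∀ x, HasDerivAt F (f x) x := fun x =>
    (intervalIntegral.integral_hasDerivAt_right (hfc.intervalIntegrable _ _)
      (hfc.stronglyMeasurableAtFilter _ _) hfc.continuousAt).const_add _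
  have hFe : ∀ x ∈ Icc (0 : ℝ) 1, F x = H μ 0 x := by
    refine huniq F (H μ 0) f f0 (fun x _ => (hFd x).hasDerivWithinAt) (fun x hx => ?_) hfe
      (by simp [hF])
    exact ((h0.differentiableOn two_ne_zero) x hx).hasDerivWithinAt
  obtain ⟨B1, hB1⟩ := (isCompact_Icc (a := (-1/3 : ℝ)) (b := 3/2)).exists_bound_of_continuousOn
    hfc.continuousOn
  obtain ⟨B2, hB2⟩ := (isCompact_Icc (a := (-1/3 : ℝ)) (b := 3/2)).exists_bound_of_continuousOn
    hf'c.continuousOn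
  refine ⟨f, f', F, max B1 B2, fun x _ => hFd x, fun x _ => hfd x,
    fun x hx => (hB1 x (Ioo_subset_Icc_self hx)).trans (le_max_left _ _),
    fun x hx => (hB2 x (Ioo_subset_Icc_self hx)).trans (le_max_right _ _), fun x hx => ?_⟩
  rw [hFe x hx]
  show _ = (μ (Icc 0 x)).toReal
  congr 1
  refine measure_congr ?_
  have a1 : ∀ᵐ t ∂μ, t ∈ Icc (0 : ℝ) 1 := by
    rw [ae_iff]; exact hμ
  have a2 : ∀ᵐ t ∂μ, t ≠ x := by
    rw [ae_iff]; simpa using hν x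
  rw [Filter.eventuallyEq_set]
  filter_upwards [a1, a2] with t h1 h2
  simp only [mem_Iio, mem_Icc]
  exact ⟨fun h => ⟨h1.1, h.le⟩, fun h => lt_of_le_of_ne h.2 h2⟩

lemma iter_facts (μ : Measure ℝ) [IsProbabilityMeasure μ] (hν : ∀ c, μ {c} = 0)
    (hμ : μ (Set.Icc (0 : ℝ) 1)ᶜ = 0)
    (h0 : ContDiffOn ℝ 2 (H μ 0) (Set.Icc (0 : ℝ) 1)) (n : ℕ) :
    Measurable T^[n] ∧ (∀ c, (μ.map T^[n]) {c} = 0) ∧ (μ.map T^[n]) (Set.Icc (0 : ℝ) 1)ᶜ = 0 ∧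
    ∃ f f', Good (μ.map T^[n]) f f' := by
  induction n with
  | zero =>
    have : μ.map T^[0] = μ := Measure.map_id
    rw [this]
    exact ⟨measurable_id, hν, hμ, good_zero μ hν hμ h0⟩
  | succ n ih =>
    obtain ⟨i1, i2, i3, f, f', i4⟩ := ih
    have : IsProbabilityMeasure (μ.map T^[n]) := Measure.isProbabilityMeasure_map i1.aemeasurable
    have e : μ.map T^[n + 1] = (μ.map T^[n]).map T := by
      rw [Measure.map_map measurable_T i1, Function.iterate_succ']
    rw [e]
    obtain ⟨k, k', hk, -⟩ := good_step i2 i3 i4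
    refine ⟨?_, map_T_null _ i2, map_T_supp _, k, k', hk⟩
    rw [Function.iterate_succ']; exact measurable_T.comp i1

lemma one_div_r (y : ℝ) (n : ℕ) (hy : T^[n] y ≠ 0) : 1 / r y (n + 1) = T^[n] y := by
  have : r y (n + 1) = 1 / T^[n] y := by
    unfold r
    rw [Function.iterate_succ_apply']
    simp only [a, eps]
    generalize T^[n] y = t at *
    have key := Int.floor_add_fract (1 / t)
    unfold T
    rw [if_neg hy]
    split_ifs
    · push_cast; linarith
    · push_cast; linarith
  rw [this, one_div_one_div]

lemma H_eq (μ : Measure ℝ) [IsProbabilityMeasure μ] (hν : ∀ c, μ {c} = 0)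
    (hμ : μ (Set.Icc (0 : ℝ) 1)ᶜ = 0) (n : ℕ) (hm : Measurable T^[n + 1])
    (hnull : ∀ c, (μ.map T^[n + 1]) {c} = 0) (x : ℝ) :
    H μ (n + 1) x = ((μ.map T^[n + 1]) (Iio x)).toReal := by
  have : NullSingletonClass μ := ⟨hν⟩
  rw [Measure.map_apply hm measurableSet_Iio]
  show (μ _).toReal = _
  congr 1
  refine measure_congr ?_
  have a1 : ∀ᵐ t ∂μ, t ∈ Icc (0 : ℝ) 1 := by
    rw [ae_iff]; exact hμ
  have a2 : ∀ c : ℝ, ∀ᵐ t ∂μ, t ≠ c := by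
    intro c
    rw [ae_iff]; simpa using hν c
  have a3 : ∀ᵐ t ∂μ, Irrational t := by
    rw [ae_iff]
    have : {t : ℝ | ¬ Irrational t} = range ((↑) : ℚ → ℝ) := by
      ext t; simp [Irrational]
    rw [this]
    exact (countable_range _).measure_zero μ
  have a4 : ∀ᵐ t ∂μ, T^[n + 1] t ≠ 0 := by
    rw [ae_iff]
    have := hnull 0
    rw [Measure.map_apply hm (measurableSet_singleton 0)] at this
    simpa [preimage] using this
  rw [Filter.eventuallyEq_set]
  filter_upwards [a1, a2 0, a2 1, a3, a4] with t h1 h2 h3 h4 h5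
  simp only [mem_setOf_eq, mem_preimage, mem_Iio]
  rw [one_div_r t (n + 1) h5]
  exact ⟨fun h => h.2.2, fun h => ⟨⟨lt_of_le_of_ne h1.1 (Ne.symm h2), lt_of_le_of_ne h1.2 h3⟩, h4, h⟩⟩

/-- If `H_0` is twice continuously differentiable on `[0,1]`, then for every `n ≥ 0` the
function `h_{n+1}` is differentiable at `1` (within `[0,1]`) with `h_{n+1}'(1) = 0`. -/
theorem ocf_h_deriv_at_one (μ : Measure ℝ) [IsProbabilityMeasure μ] [NullSingletonClass μ]
    (hμ : μ (Set.Icc (0 : ℝ) 1)ᶜ = 0)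
    (h0 : ContDiffOn ℝ 2 (H μ 0) (Set.Icc (0 : ℝ) 1)) (n : ℕ) :
    HasDerivWithinAt (h μ (n + 1)) 0 (Set.Icc (0 : ℝ) 1) 1 := by
  have hν : ∀ c, μ {c} = 0 := fun c => measure_singleton c
  obtain ⟨i1, i2, i3, f, f', i4⟩ := iter_facts μ hν hμ h0 n
  obtain ⟨j1, j2, -⟩ := iter_facts μ hν hμ h0 (n + 1)
  have : IsProbabilityMeasure (μ.map T^[n]) := Measure.isProbabilityMeasure_map i1.aemeasurable
  have e : μ.map T^[n + 1] = (μ.map T^[n]).map T := by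
    rw [Measure.map_map measurable_T i1, Function.iterate_succ']
  obtain ⟨k, k', ⟨F, B, g1, g2, -, -, g5⟩, hk1⟩ := good_step i2 i3 i4
  have hsub : ∀ x ∈ Icc (0 : ℝ) 1, x ∈ Ioo (-1/3 : ℝ) (3/2) := fun x hx =>
    ⟨by linarith [hx.1], by linarith [hx.2]⟩
  have hH : ∀ x ∈ Icc (0 : ℝ) 1, H μ (n + 1) x = F x := by
    intro x hx
    rw [H_eq μ hν hμ n j1 j2 x, e]
    exact g5 x hx
  have hdH : ∀ x ∈ Icc (0 : ℝ) 1, derivWithin (H μ (n + 1)) (Icc 0 1) x = k x := by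
    intro x hx
    have : HasDerivWithinAt (H μ (n + 1)) (k x) (Icc 0 1) x :=
      ((g1 x (hsub x hx)).hasDerivWithinAt).congr hH (hH x hx)
    exact this.derivWithin (uniqueDiffOn_Icc_zero_one x hx)
  have h1m : (1 : ℝ) ∈ Icc (0 : ℝ) 1 := by simp
  have hG : 0 < G := by unfold G; positivity
  have hD1 : HasDerivAt (fun x : ℝ => (x + G - 1)⁻¹ - (x - G - 1)⁻¹) 0 1 := by
    have d1 : HasDerivAt (fun x : ℝ => x + G - 1) 1 1 :=
      ((hasDerivAt_id (1 : ℝ)).add_const G).sub_const 1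
    have d2 : HasDerivAt (fun x : ℝ => x - G - 1) 1 1 :=
      ((hasDerivAt_id (1 : ℝ)).sub_const G).sub_const 1
    have n1 : (1 : ℝ) + G - 1 ≠ 0 := by linarith
    have n2 : (1 : ℝ) - G - 1 ≠ 0 := by linarith
    have := (d1.fun_inv n1).fun_sub (d2.fun_inv n2)
    refine HasDerivAt.congr_deriv this ?_
    have e1 : (1 : ℝ) + G - 1 = G := by ring
    have e2 : (1 : ℝ) - G - 1 = -G := by ring
    rw [e1, e2]; ring
  have hD0 : ((1 : ℝ) + G - 1)⁻¹ - (1 - G - 1)⁻¹ ≠ 0 := by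
    have e1 : (1 : ℝ) + G - 1 = G := by ring
    have e2 : (1 : ℝ) - G - 1 = -G := by ring
    rw [e1, e2, inv_neg, sub_neg_eq_add]
    positivity
  have hq := (g2 1 (hsub 1 h1m)).fun_div hD1 hD0
  rw [hk1] at hq
  simp only [zero_mul, mul_zero, sub_zero, zero_div] at hq
  refine hq.hasDerivWithinAt.congr (fun x hx => ?_) ?_
  · show derivWithin (H μ (n + 1)) (Icc 0 1) x / _ = _
    rw [hdH x hx]
  · show derivWithin (H μ (n + 1)) (Icc 0 1) 1 / _ = _
    rw [hdH 1 h1m]
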